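/- In the model Y = Xβ* + ξ with p ≥ n and k* ≤ c·n for an absolute constant c, there exist constants c₁, c₂, c₃ > 0 such that if η > 0 is small enough, then with probability at least 1 − c₁e^{−c₂n}, the minimum ℓ2-norm interpolator β̂ satisfies ‖Σ^{1/2}(β̂ − β*)‖₂² ≤ max( (ρ·r*(η))², c₃‖ξ‖₂²/n ). -/

import Mathlib

open MeasureTheory ProbabilityTheory Matrix Finset
open scoped ENNReal Classical

noncomputable section

/-- Euclidean (`ℓ2`) norm of a finite real vector. -/
def enorm2 {m : ℕ} (v : Fin m → ℝ) : ℝ := Real.sqrt (∑ i, v i ^ 2)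

/-- The prediction (semi-)norm `‖Σ^{1/2} d‖₂ = √(dᵀ Σ d)`. -/
def predNorm {p : ℕ} (Sig : Matrix (Fin p) (Fin p) ℝ) (d : Fin p → ℝ) : ℝ :=
  Real.sqrt (d ⬝ᵥ Sig.mulVec d)

/-- The standard Gaussian measure `N(0, I_p)` on `ℝ^p`. -/
def stdGaussian (p : ℕ) : Measure (Fin p → ℝ) :=
  Measure.pi fun _ : Fin p => gaussianReal 0 1

/-- `Σ^{1/2} = P Λ^{1/2} Pᵀ` built from the eigendecomposition data. -/
def covHalf (p : ℕ) (lam : ℕ → ℝ) (Porth : Matrix (Fin p) (Fin p) ℝ) :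
    Matrix (Fin p) (Fin p) ℝ :=
  Porth * Matrix.diagonal (fun i : Fin p => Real.sqrt (lam ((i : ℕ) + 1))) * Porthᵀ

/-- The Gaussian law `N(0,Σ)` on `ℝ^p`, realized as the pushforward of `N(0,I_p)`
by `g ↦ Σ^{1/2} g`. -/
def mvGaussian (p : ℕ) (lam : ℕ → ℝ) (Porth : Matrix (Fin p) (Fin p) ℝ) :
    Measure (Fin p → ℝ) :=
  Measure.map (fun g => (covHalf p lam Porth).mulVec g) (stdGaussian p)

/-- `r_k(Σ) = ∑_{i=k}^p λ_i(Σ)` (eigenvalues `1`-indexed). -/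
def rsum (p : ℕ) (lam : ℕ → ℝ) (k : ℕ) : ℝ := ∑ i ∈ Finset.Icc k p, lam i

/-- The set `{k ∈ {1,…,p} : r_k(Σ)/λ_k(Σ) ≥ c₀ n}`. -/
def kstarSet (p : ℕ) (lam : ℕ → ℝ) (c0 : ℝ) (n : ℕ) : Set ℕ :=
  {k | 1 ≤ k ∧ k ≤ p ∧ c0 * n ≤ rsum p lam k / lam k}

/-- `k* = inf { k ∈ {1,…,p} : r_k(Σ)/λ_k(Σ) ≥ c₀ n }`. -/
def kstar (p : ℕ) (lam : ℕ → ℝ) (c0 : ℝ) (n : ℕ) : ℕ := sInf (kstarSet p lam c0 n)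

/-- `ρ = ‖β*‖₂ + 4‖ξ‖₂/√(r_{k*}(Σ))`. -/
def rho (p : ℕ) (lam : ℕ → ℝ) (c0 : ℝ) (n : ℕ) (βstar : Fin p → ℝ) (ξnorm : ℝ) : ℝ :=
  enorm2 βstar + 4 * ξnorm / Real.sqrt (rsum p lam (kstar p lam c0 n))

/-- `r*(η) = inf { r > 0 : ∑ᵢ min(λ_i(Σ), r²) ≤ η n r² }`. -/
def rstar (p n : ℕ) (lam : ℕ → ℝ) (η : ℝ) : ℝ :=
  sInf {r : ℝ | 0 < r ∧ ∑ i : Fin p, min (lam ((i : ℕ) + 1)) (r ^ 2) ≤ η * n * r ^ 2}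

/-- `r̄(γ) = sup { r > 0 : ∑ᵢ min(λ_i(Σ)ρ², r²) ≤ γ ‖ξ‖₂² }`. -/
def rbar (p : ℕ) (lam : ℕ → ℝ) (γ ρ ξnorm : ℝ) : ℝ :=
  sSup {r : ℝ | 0 < r ∧ ∑ i : Fin p, min (lam ((i : ℕ) + 1) * ρ ^ 2) (r ^ 2) ≤ γ * ξnorm ^ 2}

/-- `k̄ = inf { k ≥ k* : r_k(Σ) ≤ (γ/2) r_{k*}(Σ) }`, with `k̄ = p+1` if the set is empty. -/
def kbar (p : ℕ) (lam : ℕ → ℝ) (c0 : ℝ) (n : ℕ) (γ : ℝ) : ℕ :=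
  if _h : {k | kstar p lam c0 n ≤ k ∧
      rsum p lam k ≤ γ / 2 * rsum p lam (kstar p lam c0 n)}.Nonempty
  then sInf {k | kstar p lam c0 n ≤ k ∧
      rsum p lam k ≤ γ / 2 * rsum p lam (kstar p lam c0 n)}
  else p + 1

/-- `b` is a minimum `ℓ2`-norm interpolator for the design `M` and responses `Y`. -/
def IsMinInterp {n p : ℕ} (M : Fin n → Fin p → ℝ) (Y : Fin n → ℝ) (b : Fin p → ℝ) : Prop :=
  (∀ i, ∑ j, M i j * b j = Y i) ∧
    ∀ b' : Fin p → ℝ, (∀ i, ∑ j, M i j * b' j = Y i) → enorm2 b ≤ enorm2 b'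

/-- In a finite-dimensional real normed space, the unit ball has a `1/2`-net of at most
`5 ^ dim` points. -/
lemma exists_half_net (E : Type*) [NormedAddCommGroup E] [NormedSpace ℝ E]
    [FiniteDimensional ℝ E] :
    ∃ N : Finset E, N.card ≤ 5 ^ Module.finrank ℝ E ∧
      ∀ x : E, ‖x‖ ≤ 1 → ∃ v ∈ N, ‖x - v‖ ≤ 1 / 2 := by
  let Q : ℕ → Prop := fun k => ∃ s : Finset E, s.card = k ∧ (∀ c ∈ s, ‖c‖ ≤ 2) ∧
    ∀ c ∈ s, ∀ d ∈ s, c ≠ d → 1 ≤ ‖c - d‖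
  have hQ0 : Q 0 := ⟨∅, by simp, by simp, by simp⟩
  obtain ⟨s, hcard, hs2, hsep⟩ : Q (Nat.findGreatest Q (5 ^ Module.finrank ℝ E)) :=
    Nat.findGreatest_spec (Nat.zero_le _) hQ0
  refine ⟨s.image (fun v => (2 : ℝ)⁻¹ • v), card_image_le.trans ?_, fun x hx => ?_⟩
  · exact Besicovitch.card_le_of_separated s hs2 hsep
  by_contra! hfar
  have hsplit : ∀ d : E, x - (2 : ℝ)⁻¹ • d = (2 : ℝ)⁻¹ • ((2 : ℝ) • x - d) := fun d => by
    rw [smul_sub, smul_smul]; norm_num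
  have hfar2 : ∀ d ∈ s, 1 ≤ ‖(2 : ℝ) • x - d‖ := fun d hd => by
    have h := hfar _ (mem_image_of_mem _ hd)
    rw [hsplit, norm_smul, Real.norm_of_nonneg (by norm_num)] at h
    linarith
  have hnot : (2 : ℝ) • x ∉ s := fun hm => by
    have := hfar2 _ hm
    simp only [sub_self, norm_zero] at this
    linarith
  have hnorm : ‖(2 : ℝ) • x‖ ≤ 2 := by
    rw [norm_smul, Real.norm_of_nonneg (by norm_num)]; linarith
  have hbig : Q (s.card + 1) := by
    refine ⟨insert ((2 : ℝ) • x) s, card_insert_of_notMem hnot, ?_, ?_⟩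
    · intro c hc
      rcases Finset.mem_insert.1 hc with rfl | hc
      exacts [hnorm, hs2 c hc]
    · intro c hc d hd hcd
      rcases Finset.mem_insert.1 hc with rfl | hc <;> rcases Finset.mem_insert.1 hd with rfl | hd
      · exact absurd rfl hcd
      · exact hfar2 d hd
      · rw [norm_sub_rev]; exact hfar2 c hc
      · exact hsep c hc d hd hcd
  have hle : s.card + 1 ≤ 5 ^ Module.finrank ℝ E := by
    obtain ⟨t, ht, ht2, htsep⟩ := hbig
    exact ht ▸ Besicovitch.card_le_of_separated t ht2 htsep
  have := Nat.le_findGreatest hle hbig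
  omega

/-- A net of the unit ball at scale `ε` and one at scale `δ` combine to one at scale `ε * δ`. -/
lemma exists_net_mul {E : Type*} [NormedAddCommGroup E] [NormedSpace ℝ E] {ε δ : ℝ} (hε : 0 < ε)
    {N M : Finset E} (hN : ∀ x : E, ‖x‖ ≤ 1 → ∃ v ∈ N, ‖x - v‖ ≤ ε)
    (hM : ∀ x : E, ‖x‖ ≤ 1 → ∃ v ∈ M, ‖x - v‖ ≤ δ) :
    ∃ K : Finset E, K.card ≤ N.card * M.card ∧
      ∀ x : E, ‖x‖ ≤ 1 → ∃ v ∈ K, ‖x - v‖ ≤ ε * δ := by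
  refine ⟨(N ×ˢ M).image (fun q => q.1 + ε • q.2), ?_, fun x hx => ?_⟩
  · exact card_image_le.trans (card_product _ _).le
  obtain ⟨v, hv, hxv⟩ := hN x hx
  obtain ⟨w, hw, hxw⟩ := hM (ε⁻¹ • (x - v)) (by
    rw [norm_smul, norm_inv, Real.norm_of_nonneg hε.le, inv_mul_le_iff₀ hε]; linarith)
  refine ⟨v + ε • w, mem_image.2 ⟨(v, w), mem_product.2 ⟨hv, hw⟩, rfl⟩, ?_⟩
  have : x - (v + ε • w) = ε • (ε⁻¹ • (x - v) - w) := by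
    rw [smul_sub, smul_inv_smul₀ hε.ne']; abel
  rw [this, norm_smul, Real.norm_of_nonneg hε.le]
  gcongr

/-- The unit ball has a `1/16`-net of at most `625 ^ dim` points. -/
lemma exists_fine_net (E : Type*) [NormedAddCommGroup E] [NormedSpace ℝ E]
    [FiniteDimensional ℝ E] :
    ∃ N : Finset E, N.card ≤ 625 ^ Module.finrank ℝ E ∧
      ∀ x : E, ‖x‖ ≤ 1 → ∃ v ∈ N, ‖x - v‖ ≤ 1 / 16 := by
  obtain ⟨N, hNc, hN⟩ := exists_half_net E
  obtain ⟨M, hMc, hM⟩ := exists_net_mul (by norm_num) hN hN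
  obtain ⟨K, hKc, hK⟩ := exists_net_mul (by norm_num) hM hM
  refine ⟨K, ?_, fun x hx => ?_⟩
  · calc K.card ≤ M.card * M.card := hKc
      _ ≤ (N.card * N.card) * (N.card * N.card) := Nat.mul_le_mul hMc hMc
      _ ≤ (5 ^ Module.finrank ℝ E * 5 ^ Module.finrank ℝ E) *
          (5 ^ Module.finrank ℝ E * 5 ^ Module.finrank ℝ E) := by gcongr
      _ = 625 ^ Module.finrank ℝ E := by rw [← mul_pow, ← mul_pow]; norm_num
  · obtain ⟨v, hv, h⟩ := hK x hx
    exact ⟨v, hv, h.trans (by norm_num)⟩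

/-- An upper bound on a `1/16`-net of the unit ball propagates to the whole space. -/
lemma norm_le_of_fine_net {E F : Type*} [NormedAddCommGroup E] [NormedSpace ℝ E]
    [NormedAddCommGroup F] [NormedSpace ℝ F] {N : Finset E}
    (hN : ∀ x : E, ‖x‖ ≤ 1 → ∃ v ∈ N, ‖x - v‖ ≤ 1 / 16) (L : E →L[ℝ] F) {t : ℝ} (ht : 0 ≤ t)
    (hL : ∀ v ∈ N, ‖L v‖ ≤ 2 * t * ‖v‖) (x : E) : ‖L x‖ ≤ 3 * t * ‖x‖ := by
  have hunit : ∀ y : E, ‖y‖ = 1 → ‖L y‖ ≤ 17 / 8 * t + ‖L‖ * (1 / 16) := fun y hy => by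
    obtain ⟨v, hv, hyv⟩ := hN y hy.le
    have hv1 : ‖v‖ ≤ 17 / 16 := by
      have := norm_sub_norm_le v y
      rw [norm_sub_rev] at this
      linarith
    calc ‖L y‖ = ‖L v + L (y - v)‖ := by rw [← map_add]; simp
      _ ≤ ‖L v‖ + ‖L (y - v)‖ := norm_add_le _ _
      _ ≤ 2 * t * (17 / 16) + ‖L‖ * (1 / 16) := by
          gcongr
          · exact (hL v hv).trans (by gcongr)
          · exact (L.le_opNorm _).trans (by gcongr)
      _ = _ := by ring
  have hop : ‖L‖ ≤ 17 / 8 * t + ‖L‖ * (1 / 16) := by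
    refine L.opNorm_le_of_unit_norm (by positivity) hunit
  exact (L.le_opNorm x).trans (by gcongr; linarith)

/-- Two-sided bounds on a `1/16`-net of the unit ball give a lower bound on the whole space. -/
lemma le_norm_of_fine_net {E F : Type*} [NormedAddCommGroup E] [NormedSpace ℝ E]
    [NormedAddCommGroup F] [NormedSpace ℝ F] {N : Finset E}
    (hN : ∀ x : E, ‖x‖ ≤ 1 → ∃ v ∈ N, ‖x - v‖ ≤ 1 / 16) (L : E →L[ℝ] F) {t : ℝ} (ht : 0 ≤ t)
    (hL : ∀ v ∈ N, ‖L v‖ ≤ 2 * t * ‖v‖) (hL' : ∀ v ∈ N, t / 2 * ‖v‖ ≤ ‖L v‖) (x : E) :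
    t / 4 * ‖x‖ ≤ ‖L x‖ := by
  have hunit : ∀ y : E, ‖y‖ = 1 → t / 4 ≤ ‖L y‖ := fun y hy => by
    obtain ⟨v, hv, hyv⟩ := hN y hy.le
    have hv1 : 15 / 16 ≤ ‖v‖ := by
      have := norm_sub_norm_le y v
      linarith
    have h1 : ‖L v‖ ≤ ‖L y‖ + ‖L (y - v)‖ := by
      calc ‖L v‖ = ‖L y - L (y - v)‖ := by rw [← map_sub]; simp
        _ ≤ _ := norm_sub_le _ _
    have h2 : ‖L (y - v)‖ ≤ 3 * t * (1 / 16) :=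
      (norm_le_of_fine_net hN L ht hL _).trans (by gcongr)
    have h3 : t / 2 * (15 / 16) ≤ ‖L v‖ := (by gcongr : _ ≤ t / 2 * ‖v‖).trans (hL' v hv)
    linarith
  rcases eq_or_ne x 0 with rfl | hx
  · simp
  have hx' : 0 < ‖x‖ := norm_pos_iff.2 hx
  have h := hunit (‖x‖⁻¹ • x) (by rw [norm_smul, norm_inv, norm_norm, inv_mul_cancel₀ hx'.ne'])
  rw [map_smul, norm_smul, norm_inv, norm_norm, inv_mul_eq_div, le_div_iff₀ hx'] at h
  exact h

/-- Pushing an i.i.d. standard Gaussian array through an orthonormal family of linear functionals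
gives an i.i.d. standard Gaussian vector. -/
lemma map_gaussian_of_orthonormal {J : Type*} [Fintype J] {n p : ℕ}
    (a : J → Fin n → Fin p → ℝ)
    (ha : ∀ t : J → ℝ, ∑ i, ∑ k, (∑ j, t j * a j i k) ^ 2 = ∑ j, t j ^ 2) :
    (Measure.pi fun _ : Fin n => Measure.pi fun _ : Fin p => gaussianReal 0 1).map
      (fun G j => ∑ i, ∑ k, a j i k * G i k) = Measure.pi fun _ : J => gaussianReal 0 1 := by
  have hmeas : Measurable fun (G : Fin n → Fin p → ℝ) (j : J) => ∑ i, ∑ k, a j i k * G i k := by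
    fun_prop
  have := Measure.isProbabilityMeasure_map
    (μ := Measure.pi fun _ : Fin n => Measure.pi fun _ : Fin p => gaussianReal 0 1)
    hmeas.aemeasurable
  refine charFun_eq_pi_iff.1 fun t => ?_
  obtain ⟨b, hb⟩ : ∃ b : Fin n → Fin p → ℝ, ∀ i k, b i k = ∑ j, t j * a j i k := ⟨_, fun _ _ => rfl⟩
  have hlin : ∀ G : Fin n → Fin p → ℝ,
      inner ℝ (WithLp.toLp 2 fun j => ∑ i, ∑ k, a j i k * G i k) t = ∑ i, ∑ k, b i k * G i k :=
    fun G => by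
      simp only [PiLp.inner_apply, RCLike.inner_apply, conj_trivial, hb, Finset.mul_sum,
        Finset.sum_mul]
      rw [Finset.sum_comm]
      refine Finset.sum_congr rfl fun i _ => ?_
      rw [Finset.sum_comm]
      exact Finset.sum_congr rfl fun k _ => Finset.sum_congr rfl fun j _ => by ring
  have hinner : ∀ i, ∫ g : Fin p → ℝ, ∏ k, Complex.exp (((b i k * g k : ℝ) : ℂ) * Complex.I)
      ∂(Measure.pi fun _ : Fin p => gaussianReal 0 1) =
      ∏ k, Complex.exp (-(((b i k ^ 2 : ℝ) : ℂ) / 2)) := fun i => by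
    rw [integral_fintype_prod_eq_prod
      (f := fun k (g : ℝ) => Complex.exp (((b i k * g : ℝ) : ℂ) * Complex.I))]
    refine Finset.prod_congr rfl fun k _ => ?_
    have h := charFun_gaussianReal (μ := 0) (v := 1) (b i k)
    rw [charFun_apply_real] at h
    simp only [Complex.ofReal_mul]
    rw [h]
    simp
  have htoLp : Measurable (WithLp.toLp 2 : (J → ℝ) → EuclideanSpace ℝ J) :=
    (MeasurableEquiv.toLp 2 (J → ℝ)).measurable
  rw [charFun_apply, integral_map htoLp.aemeasurable
      (Measurable.aestronglyMeasurable (by fun_prop)), integral_map hmeas.aemeasurable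
      (Measurable.aestronglyMeasurable (by fun_prop))]
  simp_rw [hlin, Complex.ofReal_sum, Finset.sum_mul, Complex.exp_sum]
  rw [integral_fintype_prod_eq_prod (f := fun i (g : Fin p → ℝ) =>
    ∏ k, Complex.exp (((b i k * g k : ℝ) : ℂ) * Complex.I))]
  simp_rw [hinner, charFun_gaussianReal, ← Complex.exp_sum]
  congr 1
  simp only [Finset.sum_neg_distrib, ← Finset.sum_div, ← Complex.ofReal_sum, hb, ha]
  simp [Finset.sum_div]

/-- The moment generating function of the square of a standard Gaussian variable. -/
lemma integrable_exp_mul_sq_gaussianReal {s : ℝ} (hs : s < 1 / 2) :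
    Integrable (fun x : ℝ => Real.exp (s * x ^ 2)) (gaussianReal 0 1) := by
  rw [gaussianReal_of_var_ne_zero _ one_ne_zero,
    integrable_withDensity_iff_integrable_smul' (measurable_gaussianPDF _ _)
      (ae_of_all _ fun _ => gaussianPDF_lt_top)]
  have h := (integrable_exp_neg_mul_sq (b := 1 / 2 - s) (by linarith)).const_mul
    (√(2 * Real.pi))⁻¹
  refine h.congr (ae_of_all _ fun x => ?_)
  simp only [toReal_gaussianPDF, gaussianPDFReal, smul_eq_mul, NNReal.coe_one, mul_one, sub_zero]
  rw [mul_assoc, ← Real.exp_add]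
  ring_nf

lemma integral_exp_mul_sq_gaussianReal {s : ℝ} (hs : s < 1 / 2) :
    ∫ x : ℝ, Real.exp (s * x ^ 2) ∂(gaussianReal 0 1) = √((1 - 2 * s)⁻¹) := by
  rw [integral_gaussianReal_eq_integral_smul one_ne_zero]
  have hpt : ∀ x : ℝ, gaussianPDFReal 0 1 x • Real.exp (s * x ^ 2) =
      (√(2 * Real.pi))⁻¹ * Real.exp (-(1 / 2 - s) * x ^ 2) := fun x => by
    simp only [gaussianPDFReal, smul_eq_mul, NNReal.coe_one, mul_one, sub_zero]
    rw [mul_assoc, ← Real.exp_add]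
    ring_nf
  simp_rw [hpt]
  rw [integral_const_mul, integral_gaussian, ← Real.sqrt_inv, ← Real.sqrt_mul (by positivity)]
  congr 1
  have : (1 - 2 * s) ≠ 0 := by linarith
  have : (1 / 2 - s) ≠ 0 := by linarith
  field_simp

/-- Exponential integrability of a weighted sum of squared standard Gaussians. -/
lemma integrable_exp_weighted_chiSq {J : Type*} [Fintype J] {s : ℝ} {mu : J → ℝ}
    (hs : ∀ j, s * mu j < 1 / 2) :
    Integrable (fun h : J → ℝ => Real.exp (s * ∑ j, mu j * h j ^ 2))
      (Measure.pi fun _ : J => gaussianReal 0 1) := by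
  have := Integrable.fintype_prod (𝕜 := ℝ) (μ := fun _ : J => gaussianReal 0 1)
    (fun j => integrable_exp_mul_sq_gaussianReal (hs j))
  refine this.congr (ae_of_all _ fun h => ?_)
  simp only [Finset.mul_sum, Real.exp_sum, mul_assoc]

lemma mgf_weighted_chiSq {J : Type*} [Fintype J] {s : ℝ} {mu : J → ℝ}
    (hs : ∀ j, s * mu j < 1 / 2) :
    mgf (fun h : J → ℝ => ∑ j, mu j * h j ^ 2) (Measure.pi fun _ : J => gaussianReal 0 1) s =
      ∏ j, √((1 - 2 * (s * mu j))⁻¹) := by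
  simp_rw [mgf, Finset.mul_sum, Real.exp_sum, ← mul_assoc s]
  rw [integral_fintype_prod_eq_prod (f := fun j (x : ℝ) => Real.exp (s * mu j * x ^ 2))]
  exact Finset.prod_congr rfl fun j _ => integral_exp_mul_sq_gaussianReal (hs j)

lemma sqrt_inv_one_sub_le {x : ℝ} (hx0 : 0 ≤ x) (hx : x ≤ 1 / 2) :
    √((1 - x)⁻¹) ≤ Real.exp x := by
  rw [Real.sqrt_le_left (Real.exp_pos _).le, ← Real.exp_nat_mul, inv_le_comm₀ (by linarith)
    (Real.exp_pos _), ← Real.exp_neg]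
  have h1 : 1 + 2 * x ≤ Real.exp (2 * x) := by linarith [Real.add_one_le_exp (2 * x)]
  have h2 : Real.exp (-(((2 : ℕ) : ℝ) * x)) = (Real.exp (2 * x))⁻¹ := by
    rw [← Real.exp_neg]; norm_num
  rw [h2, inv_le_comm₀ (Real.exp_pos _) (by linarith)]
  refine le_trans ?_ h1
  rw [inv_le_iff_one_le_mul₀ (by linarith)]
  nlinarith

lemma sqrt_inv_one_add_le {x : ℝ} (hx0 : 0 ≤ x) (hx : x ≤ 1) :
    √((1 + x)⁻¹) ≤ Real.exp (-(x / 4)) := by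
  rw [Real.sqrt_le_left (Real.exp_pos _).le, ← Real.exp_nat_mul,
    inv_le_comm₀ (by linarith) (Real.exp_pos _), ← Real.exp_neg]
  have h1 : 1 - x / 2 ≤ Real.exp (-(x / 2)) := by linarith [Real.add_one_le_exp (-(x / 2))]
  have h2 : Real.exp (-(((2 : ℕ) : ℝ) * -(x / 4))) = (Real.exp (-(x / 2)))⁻¹ := by
    rw [← Real.exp_neg]; congr 1; push_cast; ring
  rw [h2, inv_le_comm₀ (Real.exp_pos _) (by linarith)]
  refine le_trans ?_ h1
  rw [inv_le_iff_one_le_mul₀ (by linarith)]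
  nlinarith

/-- Upper tail of a weighted sum of squared standard Gaussians. -/
lemma weighted_chiSq_upper_tail {J : Type*} [Fintype J] {mu : J → ℝ} {b T : ℝ} (hb : 0 < b)
    (hmu0 : ∀ j, 0 ≤ mu j) (hmub : ∀ j, mu j ≤ b) (hT : ∑ j, mu j ≤ T) :
    (Measure.pi fun _ : J => gaussianReal 0 1).real {h | 4 * T ≤ ∑ j, mu j * h j ^ 2} ≤
      Real.exp (-(T / (2 * b))) := by
  have hsm : ∀ j, 0 ≤ 1 / (4 * b) * mu j ∧ 1 / (4 * b) * mu j ≤ 1 / 4 := fun j => by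
    refine ⟨mul_nonneg (by positivity) (hmu0 j), ?_⟩
    rw [div_mul_eq_mul_div, one_mul, div_le_iff₀ (by positivity)]
    linarith [hmub j]
  have hs : ∀ j, 1 / (4 * b) * mu j < 1 / 2 := fun j => by linarith [(hsm j).2]
  refine (measure_ge_le_exp_mul_mgf (4 * T) (t := 1 / (4 * b)) (by positivity)
    (integrable_exp_weighted_chiSq hs)).trans ?_
  rw [mgf_weighted_chiSq hs]
  calc _ ≤ Real.exp (-(1 / (4 * b)) * (4 * T)) *
        ∏ j, Real.exp (2 * (1 / (4 * b) * mu j)) := by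
        gcongr with j
        exact sqrt_inv_one_sub_le (by linarith [(hsm j).1]) (by linarith [(hsm j).2])
    _ = Real.exp (-(1 / (4 * b)) * (4 * T) + 1 / (2 * b) * ∑ j, mu j) := by
        rw [← Real.exp_sum, ← Real.exp_add, Finset.mul_sum]
        congr 2
        exact Finset.sum_congr rfl fun j _ => by field_simp; norm_num
    _ ≤ Real.exp (-(1 / (4 * b)) * (4 * T) + 1 / (2 * b) * T) := by gcongr
    _ = _ := by congr 1; field_simp; norm_num

/-- Lower tail of a weighted sum of squared standard Gaussians. -/
lemma weighted_chiSq_lower_tail {J : Type*} [Fintype J] {mu : J → ℝ} {b : ℝ} (hb : 0 < b)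
    (hmu0 : ∀ j, 0 ≤ mu j) (hmub : ∀ j, mu j ≤ b) :
    (Measure.pi fun _ : J => gaussianReal 0 1).real
      {h | ∑ j, mu j * h j ^ 2 ≤ (∑ j, mu j) / 4} ≤ Real.exp (-((∑ j, mu j) / (8 * b))) := by
  have hsm : ∀ j, 0 ≤ 1 / (2 * b) * mu j ∧ 1 / (2 * b) * mu j ≤ 1 / 2 := fun j => by
    refine ⟨mul_nonneg (by positivity) (hmu0 j), ?_⟩
    rw [div_mul_eq_mul_div, one_mul, div_le_iff₀ (by positivity)]
    linarith [hmub j]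
  have hs : ∀ j, -(1 / (2 * b)) * mu j < 1 / 2 := fun j => by linarith [(hsm j).1]
  refine (measure_le_le_exp_mul_mgf ((∑ j, mu j) / 4) (t := -(1 / (2 * b)))
    (by rw [neg_nonpos]; positivity) (integrable_exp_weighted_chiSq hs)).trans ?_
  rw [mgf_weighted_chiSq hs]
  calc _ ≤ Real.exp (-(-(1 / (2 * b))) * ((∑ j, mu j) / 4)) *
        ∏ j, Real.exp (-(2 * (1 / (2 * b) * mu j) / 4)) := by
        gcongr with j
        rw [neg_mul, mul_neg, sub_neg_eq_add]
        exact sqrt_inv_one_add_le (by linarith [(hsm j).1]) (by linarith [(hsm j).2])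
    _ = Real.exp (-(-(1 / (2 * b))) * ((∑ j, mu j) / 4) - 1 / (4 * b) * ∑ j, mu j) := by
        rw [← Real.exp_sum, ← Real.exp_add, Finset.mul_sum, sub_eq_add_neg,
          ← Finset.sum_neg_distrib]
        congr 2
        exact Finset.sum_congr rfl fun j _ => by field_simp
    _ = _ := by congr 1; field_simp; ring

lemma norm_toLpLin_sq {J ι : Type*} [Fintype J] [Fintype ι] (M : J → ι → ℝ)
    (v : EuclideanSpace ℝ ι) :
    ‖Matrix.toLpLin 2 2 (Matrix.of M) v‖ ^ 2 = ∑ j, (∑ i, M j i * v i) ^ 2 := by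
  rw [EuclideanSpace.real_norm_sq_eq]
  simp [Matrix.toLpLin_apply, Matrix.mulVec, dotProduct]

lemma sum_sq_unit_vector {J ι : Type*} [Fintype J] [Fintype ι] (M : J → ι → ℝ)
    {v : EuclideanSpace ℝ ι} :
    ∑ j, (∑ i, M j i * v i) ^ 2 =
      ‖v‖ ^ 2 * ∑ j, (∑ i, M j i * (‖v‖⁻¹ * v i)) ^ 2 := by
  rcases eq_or_ne v 0 with rfl | hv
  · simp
  have hv' : ‖v‖ ≠ 0 := norm_ne_zero_iff.2 hv
  rw [Finset.mul_sum]
  refine Finset.sum_congr rfl fun j _ => ?_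
  rw [← mul_pow, Finset.mul_sum]
  congr 1
  refine Finset.sum_congr rfl fun i _ => ?_
  field_simp

lemma sum_sq_normalize {ι : Type*} [Fintype ι] {v : EuclideanSpace ℝ ι} (hv : v ≠ 0) :
    ∑ i, (‖v‖⁻¹ * v i) ^ 2 = 1 := by
  have hv' : ‖v‖ ≠ 0 := norm_ne_zero_iff.2 hv
  simp_rw [mul_pow]
  rw [← Finset.mul_sum, ← EuclideanSpace.real_norm_sq_eq, ← mul_pow, inv_mul_cancel₀ hv', one_pow]

/-- A union bound over a net: if each unit vector is mapped below `2 √T` outside an event of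
probability at most `q`, then the random matrix has operator norm at most `3 √T` outside an event
of probability at most `625 ^ m * q`. -/
lemma measure_exists_large_le {Ω : Type*} [MeasurableSpace Ω] (P : Measure Ω) {J ι : Type*}
    [Fintype J] [Fintype ι] (M : Ω → J → ι → ℝ) {T : ℝ} (hT : 0 ≤ T) {q : ℝ≥0∞}
    (htail : ∀ v : ι → ℝ, ∑ i, v i ^ 2 = 1 →
      P {ω | 4 * T ≤ ∑ j, (∑ i, M ω j i * v i) ^ 2} ≤ q) :
    P {ω | ¬ ∀ v : ι → ℝ, ∑ j, (∑ i, M ω j i * v i) ^ 2 ≤ 9 * T * ∑ i, v i ^ 2} ≤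
      625 ^ Fintype.card ι * q := by
  obtain ⟨N, hNc, hN⟩ := exists_fine_net (EuclideanSpace ℝ ι)
  rw [finrank_euclideanSpace] at hNc
  set bad : EuclideanSpace ℝ ι → Set Ω := fun v =>
    {ω | 4 * T ≤ ∑ j, (∑ i, M ω j i * (‖v‖⁻¹ * v i)) ^ 2} with hbad
  have hsub : {ω | ¬ ∀ v : ι → ℝ, ∑ j, (∑ i, M ω j i * v i) ^ 2 ≤ 9 * T * ∑ i, v i ^ 2} ⊆
      ⋃ v ∈ N.filter (· ≠ 0), bad v := by
    intro ω hω
    by_contra hnot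
    refine hω fun v => ?_
    simp only [Set.mem_iUnion, Finset.mem_filter, not_exists, hbad, Set.mem_ofPred_eq, not_le]
      at hnot
    set L := (Matrix.toLpLin 2 2 (Matrix.of (M ω))).toContinuousLinearMap with hL
    have hnet : ∀ v ∈ N, ‖L v‖ ≤ 2 * √T * ‖v‖ := fun v hv => by
      refine abs_le_of_sq_le_sq' ?_ (by positivity) |>.2
      rw [hL, LinearMap.coe_toContinuousLinearMap', norm_toLpLin_sq, sum_sq_unit_vector, mul_pow,
        mul_pow, Real.sq_sqrt hT]
      rcases eq_or_ne v 0 with rfl | hv0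
      · simp
      nlinarith [hnot v ⟨hv, hv0⟩, sq_nonneg ‖v‖]
    have h := norm_le_of_fine_net hN L (Real.sqrt_nonneg T) hnet (WithLp.toLp 2 v)
    have h2 := pow_le_pow_left₀ (norm_nonneg _) h 2
    rw [hL, LinearMap.coe_toContinuousLinearMap', norm_toLpLin_sq, mul_pow, mul_pow,
      Real.sq_sqrt hT, EuclideanSpace.real_norm_sq_eq] at h2
    norm_num at h2
    exact h2
  calc _ ≤ P (⋃ v ∈ N.filter (· ≠ 0), bad v) := measure_mono hsub
    _ ≤ ∑ v ∈ N.filter (· ≠ 0), P (bad v) := measure_biUnion_finset_le _ _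
    _ ≤ ∑ v ∈ N.filter (· ≠ 0), q := Finset.sum_le_sum fun v hv =>
        htail _ (sum_sq_normalize (Finset.mem_filter.1 hv).2)
    _ = (N.filter (· ≠ 0)).card * q := by rw [Finset.sum_const, nsmul_eq_mul]
    _ ≤ 625 ^ Fintype.card ι * q := by
        gcongr
        exact_mod_cast (Finset.card_filter_le _ _).trans hNc

/-- The two-sided version of `measure_exists_large_le`, giving a lower bound on the smallest
singular value. -/
lemma measure_exists_small_le {Ω : Type*} [MeasurableSpace Ω] (P : Measure Ω) {J ι : Type*}
    [Fintype J] [Fintype ι] (M : Ω → J → ι → ℝ) {T : ℝ} (hT : 0 ≤ T) {q q' : ℝ≥0∞}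
    (htail : ∀ v : ι → ℝ, ∑ i, v i ^ 2 = 1 →
      P {ω | 4 * T ≤ ∑ j, (∑ i, M ω j i * v i) ^ 2} ≤ q)
    (htail' : ∀ v : ι → ℝ, ∑ i, v i ^ 2 = 1 →
      P {ω | ∑ j, (∑ i, M ω j i * v i) ^ 2 ≤ T / 4} ≤ q') :
    P {ω | ¬ ∀ v : ι → ℝ, T / 16 * ∑ i, v i ^ 2 ≤ ∑ j, (∑ i, M ω j i * v i) ^ 2} ≤
      625 ^ Fintype.card ι * (q + q') := by
  obtain ⟨N, hNc, hN⟩ := exists_fine_net (EuclideanSpace ℝ ι)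
  rw [finrank_euclideanSpace] at hNc
  set bad : EuclideanSpace ℝ ι → Set Ω := fun v =>
    {ω | 4 * T ≤ ∑ j, (∑ i, M ω j i * (‖v‖⁻¹ * v i)) ^ 2} ∪
    {ω | ∑ j, (∑ i, M ω j i * (‖v‖⁻¹ * v i)) ^ 2 ≤ T / 4} with hbad
  have hsub : {ω | ¬ ∀ v : ι → ℝ, T / 16 * ∑ i, v i ^ 2 ≤ ∑ j, (∑ i, M ω j i * v i) ^ 2} ⊆
      ⋃ v ∈ N.filter (· ≠ 0), bad v := by
    intro ω hω
    by_contra hnot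
    refine hω fun v => ?_
    simp only [Set.mem_iUnion, Finset.mem_filter, not_exists, hbad, Set.mem_union,
      Set.mem_ofPred_eq, not_or, not_le] at hnot
    set L := (Matrix.toLpLin 2 2 (Matrix.of (M ω))).toContinuousLinearMap with hL
    have hnet : ∀ v ∈ N, ‖L v‖ ≤ 2 * √T * ‖v‖ := fun v hv => by
      refine abs_le_of_sq_le_sq' ?_ (by positivity) |>.2
      rw [hL, LinearMap.coe_toContinuousLinearMap', norm_toLpLin_sq, sum_sq_unit_vector, mul_pow,
        mul_pow, Real.sq_sqrt hT]
      rcases eq_or_ne v 0 with rfl | hv0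
      · simp
      nlinarith [(hnot v ⟨hv, hv0⟩).1, sq_nonneg ‖v‖]
    have hnet' : ∀ v ∈ N, √T / 2 * ‖v‖ ≤ ‖L v‖ := fun v hv => by
      refine abs_le_of_sq_le_sq' ?_ (norm_nonneg _) |>.2
      rw [hL, LinearMap.coe_toContinuousLinearMap', norm_toLpLin_sq, sum_sq_unit_vector, mul_pow,
        div_pow, Real.sq_sqrt hT]
      rcases eq_or_ne v 0 with rfl | hv0
      · simp
      nlinarith [(hnot v ⟨hv, hv0⟩).2, sq_nonneg ‖v‖]
    have h := le_norm_of_fine_net hN L (Real.sqrt_nonneg T) hnet hnet' (WithLp.toLp 2 v)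
    have h2 := pow_le_pow_left₀ (by positivity) h 2
    rw [hL, LinearMap.coe_toContinuousLinearMap', norm_toLpLin_sq, mul_pow, div_pow,
      Real.sq_sqrt hT, EuclideanSpace.real_norm_sq_eq] at h2
    norm_num at h2
    exact h2
  calc _ ≤ P (⋃ v ∈ N.filter (· ≠ 0), bad v) := measure_mono hsub
    _ ≤ ∑ v ∈ N.filter (· ≠ 0), P (bad v) := measure_biUnion_finset_le _ _
    _ ≤ ∑ v ∈ N.filter (· ≠ 0), (q + q') := Finset.sum_le_sum fun v hv =>
        (measure_union_le _ _).trans (add_le_add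
          (htail _ (sum_sq_normalize (Finset.mem_filter.1 hv).2))
          (htail' _ (sum_sq_normalize (Finset.mem_filter.1 hv).2)))
    _ = (N.filter (· ≠ 0)).card * (q + q') := by rw [Finset.sum_const, nsmul_eq_mul]
    _ ≤ 625 ^ Fintype.card ι * (q + q') := by
        gcongr
        exact_mod_cast (Finset.card_filter_le _ _).trans hNc

lemma enorm2_eq_norm {m : ℕ} (v : Fin m → ℝ) : enorm2 v = ‖WithLp.toLp 2 v‖ := by
  simp [enorm2, EuclideanSpace.norm_eq]

lemma enorm2_sq {m : ℕ} (v : Fin m → ℝ) : enorm2 v ^ 2 = v ⬝ᵥ v := by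
  rw [enorm2, Real.sq_sqrt (Finset.sum_nonneg fun i _ => sq_nonneg _)]
  simp [dotProduct, sq]

lemma enorm2_nonneg {m : ℕ} (v : Fin m → ℝ) : 0 ≤ enorm2 v := Real.sqrt_nonneg _

lemma dotProduct_sq_le {m : ℕ} (v w : Fin m → ℝ) :
    (v ⬝ᵥ w) ^ 2 ≤ (v ⬝ᵥ v) * (w ⬝ᵥ w) := by
  simpa [dotProduct, sq] using Finset.sum_mul_sq_le_sq_mul_sq Finset.univ v w

/-- If the design has smallest singular value at least `σ`, every minimum norm interpolator of
`M βstar + ξ` is at distance at most `‖βstar‖ + ‖ξ‖ / σ` from `βstar`. -/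
lemma IsMinInterp.enorm2_sub_le {n p : ℕ} {M : Fin n → Fin p → ℝ} {βstar b : Fin p → ℝ}
    {ξ : Fin n → ℝ} (h : IsMinInterp M (fun i => (∑ j, M i j * βstar j) + ξ i) b) {σ : ℝ}
    (hσ : 0 < σ)
    (hM : ∀ u : Fin n → ℝ, σ ^ 2 * (u ⬝ᵥ u) ≤
      ((Matrix.of M)ᵀ *ᵥ u) ⬝ᵥ ((Matrix.of M)ᵀ *ᵥ u)) :
    enorm2 (fun j => b j - βstar j) ≤ enorm2 βstar + enorm2 ξ / σ := by
  set A : Matrix (Fin n) (Fin p) ℝ := Matrix.of M with hA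
  have hmul : ∀ v : Fin p → ℝ, ∀ i, ∑ j, M i j * v j = (A *ᵥ v) i := fun v i => rfl
  have hadj : ∀ (u : Fin n → ℝ) (v : Fin p → ℝ), (Aᵀ *ᵥ u) ⬝ᵥ v = u ⬝ᵥ (A *ᵥ v) := fun u v => by
    rw [Matrix.mulVec_transpose, Matrix.dotProduct_mulVec]
  have hinj : Function.Injective (A * Aᵀ).mulVecLin := by
    rw [injective_iff_map_eq_zero]
    intro u hu
    rw [Matrix.mulVecLin_apply, ← Matrix.mulVec_mulVec] at hu
    have h1 := hM u
    rw [hadj, hu, dotProduct_zero] at h1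
    have h2 : 0 ≤ u ⬝ᵥ u := by rw [← enorm2_sq]; positivity
    have h3 : u ⬝ᵥ u = 0 := by nlinarith [pow_pos hσ 2]
    exact dotProduct_self_eq_zero.1 h3
  obtain ⟨a, ha⟩ := LinearMap.injective_iff_surjective.1 hinj ξ
  rw [Matrix.mulVecLin_apply, ← Matrix.mulVec_mulVec] at ha
  set z := Aᵀ *ᵥ a with hz
  have hzz : z ⬝ᵥ z = a ⬝ᵥ ξ := by rw [hz, hadj, ← hz, ha]
  have hznorm : enorm2 z ≤ enorm2 ξ / σ := by
    rw [le_div_iff₀ hσ]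
    refine abs_le_of_sq_le_sq' ?_ (enorm2_nonneg _) |>.2
    rw [mul_pow, enorm2_sq, enorm2_sq]
    have h1 := hM a
    have h2 := dotProduct_sq_le a ξ
    rw [← hzz] at h2
    have h3 : 0 ≤ ξ ⬝ᵥ ξ := by rw [← enorm2_sq]; positivity
    have h4 : 0 ≤ z ⬝ᵥ z := by rw [← enorm2_sq]; positivity
    rcases h4.eq_or_lt with h5 | h5
    · rw [← h5]; simpa using h3
    refine le_of_mul_le_mul_left ?_ h5
    calc z ⬝ᵥ z * (z ⬝ᵥ z * σ ^ 2) = σ ^ 2 * (z ⬝ᵥ z) ^ 2 := by ring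
      _ ≤ σ ^ 2 * ((a ⬝ᵥ a) * (ξ ⬝ᵥ ξ)) := by gcongr
      _ = (σ ^ 2 * (a ⬝ᵥ a)) * (ξ ⬝ᵥ ξ) := by ring
      _ ≤ (z ⬝ᵥ z) * (ξ ⬝ᵥ ξ) := by gcongr
  set k : Fin p → ℝ := b - βstar - z with hk
  have hb : A *ᵥ b = A *ᵥ βstar + ξ := funext fun i => h.1 i
  have hker : A *ᵥ k = 0 := by
    rw [hk, Matrix.mulVec_sub, Matrix.mulVec_sub, hb, ha]; abel
  have hzk : z ⬝ᵥ k = 0 := by rw [hz, hadj, hker, dotProduct_zero]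
  have hmin : ∀ t : ℝ, 0 ≤ 2 * t * (b ⬝ᵥ k) + t ^ 2 * (k ⬝ᵥ k) := fun t => by
    have h1 := h.2 (b + t • k) fun i => by
      rw [hmul, Matrix.mulVec_add, Matrix.mulVec_smul, hker, smul_zero, add_zero]
      exact h.1 i
    have h2 := pow_le_pow_left₀ (enorm2_nonneg _) h1 2
    rw [enorm2_sq, enorm2_sq] at h2
    simp only [add_dotProduct, dotProduct_add, smul_dotProduct, dotProduct_smul, smul_eq_mul,
      dotProduct_comm k b] at h2
    linarith
  have hkk : 0 ≤ k ⬝ᵥ k := by rw [← enorm2_sq]; positivity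
  have hbk : b ⬝ᵥ k = 0 := by
    have hd := discrim_le_zero (a := k ⬝ᵥ k) (b := 2 * (b ⬝ᵥ k)) (c := 0) fun t => by
      have := hmin t; linarith
    rw [discrim] at hd
    nlinarith [sq_nonneg (b ⬝ᵥ k)]
  have hkβ : k ⬝ᵥ k = -(βstar ⬝ᵥ k) := by
    conv_lhs => rw [hk, sub_dotProduct, sub_dotProduct, ← hk, hbk, hzk]
    ring
  have hknorm : enorm2 k ≤ enorm2 βstar := by
    refine abs_le_of_sq_le_sq' ?_ (enorm2_nonneg _) |>.2
    rw [enorm2_sq, enorm2_sq]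
    have h1 := dotProduct_sq_le βstar k
    have h3 : 0 ≤ βstar ⬝ᵥ βstar := by rw [← enorm2_sq]; positivity
    rcases hkk.eq_or_lt with h5 | h5
    · rw [← h5]; exact h3
    refine le_of_mul_le_mul_right ?_ h5
    rw [hkβ] at h1 ⊢
    linarith
  have hsplit : (fun j => b j - βstar j) = k + z := by
    funext j; simp [hk]
  calc enorm2 (fun j => b j - βstar j) = enorm2 (k + z) := by rw [hsplit]
    _ ≤ enorm2 k + enorm2 z := by
        simp only [enorm2_eq_norm, WithLp.toLp_add]; exact norm_add_le _ _
    _ ≤ _ := add_le_add hknorm hznorm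

/-- Orthogonal matrices preserve sums of squares. -/
lemma sum_sq_mul_orthogonal {p : ℕ} {Q : Matrix (Fin p) (Fin p) ℝ} (hQ : Q * Qᵀ = 1)
    (d : Fin p → ℝ) : ∑ j, (∑ k, d k * Q k j) ^ 2 = ∑ k, d k ^ 2 := by
  have h : (Qᵀ *ᵥ d) ⬝ᵥ (Qᵀ *ᵥ d) = d ⬝ᵥ d := by
    rw [Matrix.mulVec_transpose, ← Matrix.dotProduct_mulVec, ← Matrix.mulVec_transpose,
      Matrix.mulVec_mulVec, hQ, Matrix.one_mulVec]
  simpa [dotProduct, Matrix.mulVec, sq, mul_comm] using h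

/-- The restricted lower isometry: the vector `e` splits into coordinates outside `B`, on which the design is
bounded below, and coordinates in `B`, on which it is small. -/
lemma sum_lam_sq_le_of_design_bounds {n p : ℕ} (hn : 0 < n) {Y : Fin n → Fin p → ℝ}
    {lam e : Fin p → ℝ} {B : Finset (Fin p)} {r : ℝ}
    (hlam : ∀ j ∉ B, 0 < lam j)
    (hlamB : ∀ j ∈ B, lam j ≤ r ^ 2 / 10000)
    (hB : ∀ u : Fin n → ℝ, ∑ j ∈ B, (∑ i, Y i j * u i) ^ 2 ≤
      9 * (16 * (r ^ 2 / 10000) * n) * ∑ i, u i ^ 2)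
    (hC : ∀ w : Fin p → ℝ, (n : ℝ) / 16 * ∑ j ∈ Bᶜ, w j ^ 2 ≤
      ∑ i, (∑ j ∈ Bᶜ, Y i j / √(lam j) * w j) ^ 2)
    (he : r ^ 2 * ∑ j, e j ^ 2 ≤ ∑ j, lam j * e j ^ 2) :
    ∑ j, lam j * e j ^ 2 ≤ 100 * (∑ i, (∑ j, Y i j * e j) ^ 2) / n := by
  set s := ∑ j, lam j * e j ^ 2 with hs
  set a₁ : Fin n → ℝ := fun i => ∑ j ∈ Bᶜ, Y i j * e j with ha₁
  set a₂ : Fin n → ℝ := fun i => ∑ j ∈ B, Y i j * e j with ha₂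
  have hn' : (0 : ℝ) < n := by exact_mod_cast hn
  have hBe : ∑ j ∈ B, e j ^ 2 ≤ ∑ j, e j ^ 2 :=
    Finset.sum_le_sum_of_subset_of_nonneg (Finset.subset_univ _) fun _ _ _ => sq_nonneg _
  have hsplit : ∀ i, ∑ j, Y i j * e j = a₂ i + a₁ i := fun i =>
    (Finset.sum_add_sum_compl B _).symm
  have hsB : ∑ j ∈ B, lam j * e j ^ 2 ≤ s / 10000 := by
    calc ∑ j ∈ B, lam j * e j ^ 2 ≤ ∑ j ∈ B, r ^ 2 / 10000 * e j ^ 2 :=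
          Finset.sum_le_sum fun j hj => by gcongr; exact hlamB j hj
      _ = r ^ 2 / 10000 * ∑ j ∈ B, e j ^ 2 := by rw [Finset.mul_sum]
      _ ≤ r ^ 2 / 10000 * ∑ j, e j ^ 2 := by gcongr
      _ ≤ s / 10000 := by linarith
  have hsC : ∑ j ∈ Bᶜ, lam j * e j ^ 2 = s - ∑ j ∈ B, lam j * e j ^ 2 := by
    rw [hs, ← Finset.sum_add_sum_compl B]; ring
  have h₁ : (n : ℝ) / 16 * (s - s / 10000) ≤ ∑ i, a₁ i ^ 2 := by
    have h := hC fun j => √(lam j) * e j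
    have hl : ∑ j ∈ Bᶜ, (√(lam j) * e j) ^ 2 = ∑ j ∈ Bᶜ, lam j * e j ^ 2 :=
      Finset.sum_congr rfl fun j hj => by
        rw [mul_pow, Real.sq_sqrt (hlam j (Finset.mem_compl.1 hj)).le]
    have hr : ∀ i, ∑ j ∈ Bᶜ, Y i j / √(lam j) * (√(lam j) * e j) = a₁ i := fun i =>
      Finset.sum_congr rfl fun j hj => by
        have := (Real.sqrt_pos.2 (hlam j (Finset.mem_compl.1 hj))).ne'
        field_simp
    simp_rw [hr] at h
    rw [hl, hsC] at h
    refine le_trans ?_ h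
    gcongr
  have h₂ : ∑ i, a₂ i ^ 2 ≤ 144 / 10000 * n * s := by
    have hdual : ∑ i, a₂ i ^ 2 = ∑ j ∈ B, e j * ∑ i, Y i j * a₂ i := by
      simp only [Finset.mul_sum]
      rw [Finset.sum_comm]
      refine Finset.sum_congr rfl fun i _ => ?_
      rw [sq]
      nth_rewrite 1 [ha₂]
      rw [Finset.sum_mul]
      exact Finset.sum_congr rfl fun j _ => by ring
    have hcs := Finset.sum_mul_sq_le_sq_mul_sq B e (fun j => ∑ i, Y i j * a₂ i)
    rw [← hdual] at hcs
    have hq : 0 ≤ ∑ i, a₂ i ^ 2 := Finset.sum_nonneg fun _ _ => sq_nonneg _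
    have he0 : 0 ≤ ∑ j ∈ B, e j ^ 2 := Finset.sum_nonneg fun _ _ => sq_nonneg _
    have hs0 : 0 ≤ s := le_trans (by positivity) he
    rcases hq.eq_or_lt with h0 | h0
    · rw [← h0]; positivity
    refine le_of_mul_le_mul_right ?_ h0
    calc (∑ i, a₂ i ^ 2) * ∑ i, a₂ i ^ 2 = (∑ i, a₂ i ^ 2) ^ 2 := by ring
      _ ≤ (∑ j ∈ B, e j ^ 2) * ∑ j ∈ B, (∑ i, Y i j * a₂ i) ^ 2 := hcs
      _ ≤ (∑ j ∈ B, e j ^ 2) * (9 * (16 * (r ^ 2 / 10000) * n) * ∑ i, a₂ i ^ 2) := by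
          gcongr; exact hB a₂
      _ = 144 / 10000 * n * (r ^ 2 * ∑ j ∈ B, e j ^ 2) * ∑ i, a₂ i ^ 2 := by ring
      _ ≤ 144 / 10000 * n * s * ∑ i, a₂ i ^ 2 := by
          gcongr
          exact le_trans (by gcongr) he
  have h₃ : ∑ i, a₁ i ^ 2 ≤ 2 * (∑ i, (∑ j, Y i j * e j) ^ 2) + 2 * ∑ i, a₂ i ^ 2 := by
    rw [Finset.mul_sum, Finset.mul_sum, ← Finset.sum_add_distrib]
    refine Finset.sum_le_sum fun i _ => ?_
    rw [hsplit]
    nlinarith [sq_nonneg (2 * a₂ i + a₁ i)]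
  have hs0 : 0 ≤ n * s := mul_nonneg hn'.le (le_trans (by positivity) he)
  rw [le_div_iff₀ hn']
  nlinarith

instance isProbabilityMeasure_mvGaussian (p : ℕ) (lam : ℕ → ℝ)
    (Porth : Matrix (Fin p) (Fin p) ℝ) : IsProbabilityMeasure (mvGaussian p lam Porth) := by
  have : IsProbabilityMeasure (_root_.stdGaussian p) := by
    unfold _root_.stdGaussian; infer_instance
  exact Measure.isProbabilityMeasure_map (by fun_prop)

lemma pi_mvGaussian (n p : ℕ) (lam : ℕ → ℝ) (Porth : Matrix (Fin p) (Fin p) ℝ) :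
    (Measure.pi fun _ : Fin n => mvGaussian p lam Porth) =
      (Measure.pi fun _ : Fin n => Measure.pi fun _ : Fin p => gaussianReal 0 1).map
        (fun G i => covHalf p lam Porth *ᵥ G i) := by
  have hprob : ∀ _ : Fin n, IsProbabilityMeasure
      ((Measure.pi fun _ : Fin p => gaussianReal 0 1).map fun g => covHalf p lam Porth *ᵥ g) :=
    fun _ => Measure.isProbabilityMeasure_map (by fun_prop)
  exact (Measure.pi_map_pi (f := fun (_ : Fin n) (g : Fin p → ℝ) => covHalf p lam Porth *ᵥ g)
    (μ := fun _ : Fin n => Measure.pi fun _ : Fin p => gaussianReal 0 1)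
    fun _ => by fun_prop).symm

lemma aemeasurable_of_map_eq_pi_mvGaussian {Ω : Type*} [MeasurableSpace Ω] {P : Measure Ω}
    {n p : ℕ} {lam : ℕ → ℝ} {Porth : Matrix (Fin p) (Fin p) ℝ} {X : Ω → Fin n → Fin p → ℝ}
    (hX : P.map X = Measure.pi fun _ : Fin n => mvGaussian p lam Porth) : AEMeasurable X P := by
  by_contra h
  rw [Measure.map_of_not_aemeasurable h] at hX
  have := congrArg (fun μ : Measure (Fin n → Fin p → ℝ) => μ Set.univ) hX
  simp at this

section DesignTails

variable {Ω : Type*} [MeasurableSpace Ω] {P : Measure Ω} {n p : ℕ} {lam : ℕ → ℝ}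
  {Porth : Matrix (Fin p) (Fin p) ℝ} {X : Ω → Fin n → Fin p → ℝ} {J : Type*} [Fintype J]

/-- Linear statistics of the design which are orthogonal, with variances `mu j`, are distributed
as independent centred Gaussians. -/
lemma measure_design_functional (hX : P.map X = Measure.pi fun _ : Fin n => mvGaussian p lam Porth)
    {φ : (Fin n → Fin p → ℝ) → J → ℝ} (hφm : Measurable φ) {a : J → Fin n → Fin p → ℝ}
    (ha : ∀ t : J → ℝ, ∑ i, ∑ k, (∑ j, t j * a j i k) ^ 2 = ∑ j, t j ^ 2) {mu : J → ℝ}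
    (hφ : ∀ (G : Fin n → Fin p → ℝ) (j : J), φ (fun i => covHalf p lam Porth *ᵥ G i) j =
      √(mu j) * ∑ i, ∑ k, a j i k * G i k)
    {S : Set (J → ℝ)} (hS : MeasurableSet S) :
    P {ω | φ (X ω) ∈ S} =
      (Measure.pi fun _ : J => gaussianReal 0 1) {h | (fun j => √(mu j) * h j) ∈ S} := by
  have hscale : Measurable fun (h : J → ℝ) (j : J) => √(mu j) * h j := by fun_prop
  have h1 : P {ω | φ (X ω) ∈ S} = (P.map X) (φ ⁻¹' S) :=
    (Measure.map_apply_of_aemeasurable (aemeasurable_of_map_eq_pi_mvGaussian hX) (hφm hS)).symm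
  have hrow : Measurable fun (G : Fin n → Fin p → ℝ) i => covHalf p lam Porth *ᵥ G i := by fun_prop
  rw [h1, hX, pi_mvGaussian, Measure.map_apply hrow (hφm hS), ← map_gaussian_of_orthonormal a ha]
  refine Eq.trans ?_ (Measure.map_apply (by fun_prop) (hscale hS)).symm
  congr 1
  ext G
  simp only [Set.mem_preimage]
  rw [show φ (fun i => covHalf p lam Porth *ᵥ G i) = fun j => √(mu j) * ∑ i, ∑ k, a j i k * G i k
    from funext fun j => hφ G j]

lemma design_upper_tail (hX : P.map X = Measure.pi fun _ : Fin n => mvGaussian p lam Porth)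
    {φ : (Fin n → Fin p → ℝ) → J → ℝ} (hφm : Measurable φ) {a : J → Fin n → Fin p → ℝ}
    (ha : ∀ t : J → ℝ, ∑ i, ∑ k, (∑ j, t j * a j i k) ^ 2 = ∑ j, t j ^ 2) {mu : J → ℝ}
    (hφ : ∀ (G : Fin n → Fin p → ℝ) (j : J), φ (fun i => covHalf p lam Porth *ᵥ G i) j =
      √(mu j) * ∑ i, ∑ k, a j i k * G i k)
    {b T : ℝ} (hb : 0 < b) (hmu0 : ∀ j, 0 ≤ mu j) (hmub : ∀ j, mu j ≤ b) (hT : ∑ j, mu j ≤ T) :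
    P {ω | 4 * T ≤ ∑ j, φ (X ω) j ^ 2} ≤ ENNReal.ofReal (Real.exp (-(T / (2 * b)))) := by
  have hS : MeasurableSet {y : J → ℝ | 4 * T ≤ ∑ j, y j ^ 2} :=
    measurableSet_le measurable_const (by fun_prop)
  refine (measure_design_functional hX hφm ha hφ hS).trans_le ?_
  simp only [Set.mem_ofPred_eq, mul_pow, Real.sq_sqrt (hmu0 _)]
  exact (ENNReal.le_ofReal_iff_toReal_le (measure_ne_top _ _) (Real.exp_pos _).le).2
    (weighted_chiSq_upper_tail hb hmu0 hmub hT)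

lemma design_lower_tail (hX : P.map X = Measure.pi fun _ : Fin n => mvGaussian p lam Porth)
    {φ : (Fin n → Fin p → ℝ) → J → ℝ} (hφm : Measurable φ) {a : J → Fin n → Fin p → ℝ}
    (ha : ∀ t : J → ℝ, ∑ i, ∑ k, (∑ j, t j * a j i k) ^ 2 = ∑ j, t j ^ 2) {mu : J → ℝ}
    (hφ : ∀ (G : Fin n → Fin p → ℝ) (j : J), φ (fun i => covHalf p lam Porth *ᵥ G i) j =
      √(mu j) * ∑ i, ∑ k, a j i k * G i k)
    {b : ℝ} (hb : 0 < b) (hmu0 : ∀ j, 0 ≤ mu j) (hmub : ∀ j, mu j ≤ b) :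
    P {ω | ∑ j, φ (X ω) j ^ 2 ≤ (∑ j, mu j) / 4} ≤
      ENNReal.ofReal (Real.exp (-((∑ j, mu j) / (8 * b)))) := by
  have hS : MeasurableSet {y : J → ℝ | ∑ j, y j ^ 2 ≤ (∑ j, mu j) / 4} :=
    measurableSet_le (by fun_prop) measurable_const
  refine (measure_design_functional hX hφm ha hφ hS).trans_le ?_
  simp only [Set.mem_ofPred_eq, mul_pow, Real.sq_sqrt (hmu0 _)]
  exact (ENNReal.le_ofReal_iff_toReal_le (measure_ne_top _ _) (Real.exp_pos _).le).2
    (weighted_chiSq_lower_tail hb hmu0 hmub)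

end DesignTails

/-- The coordinates of the rows of a design in the eigenbasis given by the columns of `Porth`. -/
def eigenDesign {n p : ℕ} (Porth : Matrix (Fin p) (Fin p) ℝ) (x : Fin n → Fin p → ℝ)
    (i : Fin n) (j : Fin p) : ℝ := ∑ k, x i k * Porth k j

lemma measurable_eigenDesign {n p : ℕ} (Porth : Matrix (Fin p) (Fin p) ℝ) (i : Fin n)
    (j : Fin p) : Measurable fun x : Fin n → Fin p → ℝ => eigenDesign Porth x i j := by
  unfold eigenDesign; fun_prop

lemma eigenDesign_covHalf {n p : ℕ} {lam : ℕ → ℝ} {Porth : Matrix (Fin p) (Fin p) ℝ}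
    (hP : Porth * Porthᵀ = 1) (G : Fin n → Fin p → ℝ) (i : Fin n) (j : Fin p) :
    eigenDesign Porth (fun i => covHalf p lam Porth *ᵥ G i) i j =
      √(lam (j + 1)) * ∑ k, Porth k j * G i k := by
  have hP' : Porthᵀ * Porth = 1 := mul_eq_one_comm.1 hP
  have h : Porthᵀ *ᵥ (covHalf p lam Porth *ᵥ G i) =
      Matrix.diagonal (fun i : Fin p => √(lam ((i : ℕ) + 1))) *ᵥ (Porthᵀ *ᵥ G i) := by
    rw [Matrix.mulVec_mulVec, Matrix.mulVec_mulVec, covHalf, ← Matrix.mul_assoc,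
      ← Matrix.mul_assoc, hP', Matrix.one_mul]
  have h' := congrFun h j
  rw [Matrix.mulVec_diagonal] at h'
  simp only [Matrix.mulVec, dotProduct, Matrix.transpose_apply] at h'
  rw [← h', eigenDesign]
  exact Finset.sum_congr rfl fun k _ => by simp only [Matrix.mulVec, dotProduct, mul_comm]

/-- Any subfamily of the columns of an orthogonal matrix is orthonormal. -/
lemma sum_sq_orthonormal_columns {p : ℕ} {Q : Matrix (Fin p) (Fin p) ℝ} (hQ : Q * Qᵀ = 1)
    (s : Finset (Fin p)) (t : s → ℝ) :
    ∑ k, (∑ j : s, t j * Q k j) ^ 2 = ∑ j, t j ^ 2 := by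
  set t' : Fin p → ℝ := fun j => if h : j ∈ s then t ⟨j, h⟩ else 0 with ht'
  have hext : ∀ f : Fin p → ℝ → ℝ, (∀ j, f j 0 = 0) →
      ∑ j : s, f j (t j) = ∑ j, f j (t' j) := fun f hf => by
    rw [← Finset.sum_subset (Finset.subset_univ s) fun j _ hj => by simp [ht', hj, hf],
      ← Finset.sum_coe_sort s]
    exact Finset.sum_congr rfl fun j _ => by simp [ht']
  have hQ' : Qᵀ * Qᵀᵀ = 1 := by rw [Matrix.transpose_transpose]; exact mul_eq_one_comm.1 hQ
  rw [hext (fun _ y => y ^ 2) (by simp), ← sum_sq_mul_orthogonal hQ' t']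
  refine Finset.sum_congr rfl fun k _ => ?_
  rw [hext (fun j y => y * Q k j) (by simp)]
  rfl

lemma fine_net_card_mul_exp_le {m n : ℕ} {x : ℝ} (hx : 7 * m + (n : ℝ) / 16 ≤ x) :
    (625 : ℝ≥0∞) ^ m * ENNReal.ofReal (Real.exp (-x)) ≤
      ENNReal.ofReal (Real.exp (-(1 / 16) * n)) := by
  have h625 : (625 : ℝ) ≤ Real.exp 7 := by
    have h := pow_le_pow_left₀ (by norm_num) Real.exp_one_gt_d9.le 7
    rw [← Real.exp_nat_mul] at h
    norm_num at h ⊢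
    linarith
  have h1 : (625 : ℝ) ^ m ≤ Real.exp (7 * m) := by
    rw [mul_comm, Real.exp_nat_mul]
    gcongr
  rw [show (625 : ℝ≥0∞) = ENNReal.ofReal 625 by simp, ← ENNReal.ofReal_pow (by norm_num),
    ← ENNReal.ofReal_mul (by positivity)]
  refine ENNReal.ofReal_le_ofReal ?_
  calc (625 : ℝ) ^ m * Real.exp (-x) ≤ Real.exp (7 * m) * Real.exp (-x) := by gcongr
    _ = Real.exp (7 * m - x) := by rw [← Real.exp_add]; rfl
    _ ≤ Real.exp (-(1 / 16) * n) := by gcongr; linarith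

section DesignBounds

variable {Ω : Type*} [MeasurableSpace Ω] {P : Measure Ω} {n p : ℕ} {lam : ℕ → ℝ}
  {Porth : Matrix (Fin p) (Fin p) ℝ} {X : Ω → Fin n → Fin p → ℝ}

lemma measurable_eigenDesign_mulVec (s : Finset (Fin p)) (u : Fin n → ℝ) :
    Measurable fun (x : Fin n → Fin p → ℝ) (j : s) => ∑ i, eigenDesign Porth x i j * u i := by
  have := measurable_eigenDesign (n := n) Porth
  fun_prop

lemma orthonormal_eigenDesign_coeff (hP : Porth * Porthᵀ = 1) (s : Finset (Fin p))
    {u : Fin n → ℝ} (hu : ∑ i, u i ^ 2 = 1) (t : s → ℝ) :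
    ∑ i, ∑ k, (∑ j : s, t j * (u i * Porth k j)) ^ 2 = ∑ j, t j ^ 2 := by
  have h : ∀ i k, (∑ j : s, t j * (u i * Porth k j)) ^ 2 =
      u i ^ 2 * (∑ j : s, t j * Porth k j) ^ 2 := fun i k => by
    rw [← mul_pow, Finset.mul_sum]
    congr 1
    exact Finset.sum_congr rfl fun j _ => by ring
  simp_rw [h, ← Finset.mul_sum, sum_sq_orthonormal_columns hP, ← Finset.sum_mul, hu, one_mul]

lemma eigenDesign_mulVec_covHalf (hP : Porth * Porthᵀ = 1) (s : Finset (Fin p)) (u : Fin n → ℝ)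
    (G : Fin n → Fin p → ℝ) (j : s) :
    ∑ i, eigenDesign Porth (fun i => covHalf p lam Porth *ᵥ G i) i j * u i =
      √(lam ((j : Fin p) + 1)) * ∑ i, ∑ k, u i * Porth k j * G i k := by
  simp_rw [eigenDesign_covHalf hP, Finset.mul_sum, Finset.sum_mul]
  exact Finset.sum_congr rfl fun i _ => Finset.sum_congr rfl fun k _ => by ring

/-- Operator norm bound for the design restricted to a set of eigendirections. -/
lemma measure_design_large_le
    (hX : P.map X = Measure.pi fun _ : Fin n => mvGaussian p lam Porth)
    (hP : Porth * Porthᵀ = 1) (s : Finset (Fin p)) {b T : ℝ} (hb : 0 < b)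
    (h0 : ∀ j ∈ s, 0 ≤ lam (j + 1)) (hlb : ∀ j ∈ s, lam (j + 1) ≤ b)
    (hT : ∑ j ∈ s, lam (j + 1) ≤ T) (hbT : 16 * b * n ≤ T) :
    P {ω | ¬ ∀ u : Fin n → ℝ, ∑ j : s, (∑ i, eigenDesign Porth (X ω) i j * u i) ^ 2 ≤
      9 * T * ∑ i, u i ^ 2} ≤ ENNReal.ofReal (Real.exp (-(1 / 16) * n)) := by
  have hT' : ∑ j : s, lam ((j : Fin p) + 1) ≤ T := by
    rwa [Finset.sum_coe_sort s fun j : Fin p => lam (j + 1)]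
  have hT0 : 0 ≤ T := le_trans (by positivity) hbT
  refine (measure_exists_large_le P (fun ω (j : s) i => eigenDesign Porth (X ω) i j) hT0
    (q := ENNReal.ofReal (Real.exp (-(T / (2 * b))))) fun u hu => ?_).trans ?_
  · exact design_upper_tail hX (measurable_eigenDesign_mulVec s u)
      (orthonormal_eigenDesign_coeff hP s hu) (eigenDesign_mulVec_covHalf hP s u) hb
      (fun j => h0 j j.2) (fun j => hlb j j.2) hT'
  · rw [Fintype.card_fin]
    refine fine_net_card_mul_exp_le ?_
    rw [le_div_iff₀ (by positivity)]
    nlinarith [mul_nonneg hb.le (Nat.cast_nonneg (α := ℝ) n)]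

/-- Lower bound on the smallest singular value of the design restricted to a set of
eigendirections of large effective rank. -/
lemma measure_design_small_le
    (hX : P.map X = Measure.pi fun _ : Fin n => mvGaussian p lam Porth)
    (hP : Porth * Porthᵀ = 1) (s : Finset (Fin p)) {b : ℝ} (hb : 0 < b)
    (h0 : ∀ j ∈ s, 0 ≤ lam (j + 1)) (hlb : ∀ j ∈ s, lam (j + 1) ≤ b)
    (hbT : 128 * b * n ≤ ∑ j ∈ s, lam (j + 1)) :
    P {ω | ¬ ∀ u : Fin n → ℝ, (∑ j ∈ s, lam (j + 1)) / 16 * ∑ i, u i ^ 2 ≤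
      ∑ j : s, (∑ i, eigenDesign Porth (X ω) i j * u i) ^ 2} ≤
      2 * ENNReal.ofReal (Real.exp (-(1 / 16) * n)) := by
  have hsum : ∑ j ∈ s, lam (j + 1) = ∑ j : s, lam ((j : Fin p) + 1) :=
    (Finset.sum_coe_sort s fun j : Fin p => lam (j + 1)).symm
  rw [hsum] at hbT ⊢
  set T := ∑ j : s, lam ((j : Fin p) + 1) with hTdef
  have hbn := mul_nonneg hb.le (Nat.cast_nonneg (α := ℝ) n)
  have hT0 : 0 ≤ T := le_trans (by positivity) hbT
  refine (measure_exists_small_le P (fun ω (j : s) i => eigenDesign Porth (X ω) i j) hT0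
    (q := ENNReal.ofReal (Real.exp (-(T / (2 * b)))))
    (q' := ENNReal.ofReal (Real.exp (-(T / (8 * b))))) (fun u hu => ?_) fun u hu => ?_).trans ?_
  · exact design_upper_tail hX (measurable_eigenDesign_mulVec s u)
      (orthonormal_eigenDesign_coeff hP s hu) (eigenDesign_mulVec_covHalf hP s u) hb
      (fun j => h0 j j.2) (fun j => hlb j j.2) le_rfl
  · exact design_lower_tail hX (measurable_eigenDesign_mulVec s u)
      (orthonormal_eigenDesign_coeff hP s hu) (eigenDesign_mulVec_covHalf hP s u) hb
      (fun j => h0 j j.2) (fun j => hlb j j.2)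
  · rw [Fintype.card_fin, mul_add,
      two_mul (ENNReal.ofReal (Real.exp (-(1 / 16) * (n : ℝ))))]
    refine add_le_add (fine_net_card_mul_exp_le ?_) (fine_net_card_mul_exp_le ?_)
    all_goals
      rw [le_div_iff₀ (by positivity)]
      nlinarith

/-- Lower bound on the smallest singular value of the whitened design restricted to few
eigendirections. -/
lemma measure_whitened_small_le
    (hX : P.map X = Measure.pi fun _ : Fin n => mvGaussian p lam Porth)
    (hP : Porth * Porthᵀ = 1) (s : Finset (Fin p)) (h0 : ∀ j ∈ s, 0 < lam (j + 1))
    (hs : 128 * (s.card : ℝ) ≤ n) :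
    P {ω | ¬ ∀ w : s → ℝ, (n : ℝ) / 16 * ∑ j, w j ^ 2 ≤
      ∑ i, (∑ j : s, eigenDesign Porth (X ω) i j / √(lam ((j : Fin p) + 1)) * w j) ^ 2} ≤
      2 * ENNReal.ofReal (Real.exp (-(1 / 16) * n)) := by
  have hmeas : ∀ w : s → ℝ, Measurable fun (x : Fin n → Fin p → ℝ) (i : Fin n) =>
      ∑ j : s, eigenDesign Porth x i j / √(lam ((j : Fin p) + 1)) * w j := fun w => by
    have := measurable_eigenDesign (n := n) Porth
    fun_prop
  have horth : ∀ w : s → ℝ, ∑ j, w j ^ 2 = 1 → ∀ t : Fin n → ℝ,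
      ∑ i, ∑ k, (∑ l, t l * (if l = i then ∑ j : s, w j * Porth k j else 0)) ^ 2 =
        ∑ i, t i ^ 2 := fun w hw t => by
    simp only [mul_ite, mul_zero, Finset.sum_ite_eq', Finset.mem_univ, if_true, mul_pow,
      ← Finset.mul_sum, sum_sq_orthonormal_columns hP, hw, mul_one]
  have hφ : ∀ w : s → ℝ, ∀ (G : Fin n → Fin p → ℝ) (l : Fin n),
      ∑ j : s, eigenDesign Porth (fun i => covHalf p lam Porth *ᵥ G i) l j /
        √(lam ((j : Fin p) + 1)) * w j =
      √1 * ∑ i, ∑ k, (if l = i then ∑ j : s, w j * Porth k j else 0) * G i k := fun w G l => by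
    have hif : ∀ i, ∑ k, (if l = i then ∑ j : s, w j * Porth k j else 0) * G i k =
        if l = i then ∑ k, (∑ j : s, w j * Porth k j) * G i k else 0 := fun i => by
      split_ifs <;> simp
    simp_rw [hif, Finset.sum_ite_eq, Finset.mem_univ, if_true, Real.sqrt_one, one_mul,
      Finset.sum_mul]
    rw [Finset.sum_comm]
    refine Finset.sum_congr rfl fun j _ => ?_
    have := (Real.sqrt_pos.2 (h0 j j.2)).ne'
    rw [eigenDesign_covHalf hP, mul_div_cancel_left₀ _ this, Finset.sum_mul]
    exact Finset.sum_congr rfl fun k _ => by ring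
  have hone : ∑ _j : Fin n, (1 : ℝ) = n := by simp
  refine (measure_exists_small_le P
    (fun ω i (j : s) => eigenDesign Porth (X ω) i j / √(lam ((j : Fin p) + 1)))
    (T := n) (by positivity) (q := ENNReal.ofReal (Real.exp (-((n : ℝ) / (2 * 1)))))
    (q' := ENNReal.ofReal (Real.exp (-((n : ℝ) / (8 * 1))))) (fun w hw => ?_)
    fun w hw => ?_).trans ?_
  · exact design_upper_tail hX (hmeas w) (horth w hw) (hφ w) one_pos
      (fun _ => zero_le_one) (fun _ => le_rfl) hone.le
  · have := design_lower_tail hX (hmeas w) (horth w hw) (hφ w) one_pos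
      (fun _ => zero_le_one) (fun _ => le_rfl)
    rwa [hone] at this
  · have hn0 : (0 : ℝ) ≤ n := Nat.cast_nonneg n
    rw [Fintype.card_coe, mul_add,
      two_mul (ENNReal.ofReal (Real.exp (-(1 / 16) * (n : ℝ))))]
    refine add_le_add (fine_net_card_mul_exp_le ?_) (fine_net_card_mul_exp_le ?_)
    all_goals linarith

end DesignBounds

lemma lam_pos_of_le_rank {n p : ℕ} (hn : 0 < n) {lam : ℕ → ℝ}
    {Porth Sig : Matrix (Fin p) (Fin p) ℝ}
    (hnonneg : ∀ k, 1 ≤ k → k ≤ p → 0 ≤ lam k)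
    (hanti : ∀ j k, 1 ≤ j → j ≤ k → k ≤ p → lam k ≤ lam j)
    (hSig : Sig = Porth * Matrix.diagonal (fun i : Fin p => lam ((i : ℕ) + 1)) * Porthᵀ)
    (hrank : n ≤ Sig.rank) : 0 < lam n := by
  by_contra hlam
  have h1 : n ≤ (Matrix.diagonal fun i : Fin p => lam ((i : ℕ) + 1)).rank := by
    rw [hSig] at hrank
    exact hrank.trans ((Matrix.rank_mul_le_left _ _).trans (Matrix.rank_mul_le_right _ _))
  rw [Matrix.rank_diagonal] at h1
  have h2 : ∀ i : Fin p, lam ((i : ℕ) + 1) ≠ 0 → (i : ℕ) < n - 1 := fun i hi => by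
    by_contra h
    have := hanti n (i + 1) hn (by omega) (by omega)
    exact hi (le_antisymm (by linarith) (hnonneg _ (by omega) (by omega)))
  have h3 := Fintype.card_le_of_injective
    (fun i : {i : Fin p // lam ((i : ℕ) + 1) ≠ 0} => (⟨i.1, h2 i.1 i.2⟩ : Fin (n - 1)))
    fun i j hij => Subtype.ext (Fin.ext (Fin.mk.inj_iff.1 hij))
  rw [Fintype.card_fin] at h3
  omega

/-- The critical radius `rstar` is positive and satisfies the inequality defining it. -/
lemma rstar_spec {n p : ℕ} (hn : 0 < n) (hnp : n ≤ p) {lam : ℕ → ℝ} {η : ℝ} (hη0 : 0 < η)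
    (hη1 : η < 1) (hnonneg : ∀ k, 1 ≤ k → k ≤ p → 0 ≤ lam k)
    (hanti : ∀ j k, 1 ≤ j → j ≤ k → k ≤ p → lam k ≤ lam j) (hlam : 0 < lam n) :
    0 < rstar p n lam η ∧
      ∑ i : Fin p, min (lam ((i : ℕ) + 1)) (rstar p n lam η ^ 2) ≤
        η * n * rstar p n lam η ^ 2 := by
  have hn' : (0 : ℝ) < n := Nat.cast_pos.2 hn
  set S := {r : ℝ | 0 < r ∧ ∑ i : Fin p, min (lam ((i : ℕ) + 1)) (r ^ 2) ≤ η * n * r ^ 2} with hS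
  have hlow : ∀ r ∈ S, √(lam n) ≤ r := by
    rintro r ⟨hr, hsum⟩
    refine Real.sqrt_le_iff.2 ⟨hr.le, ?_⟩
    by_contra! h
    have h1 : (n : ℝ) * r ^ 2 ≤ ∑ i : Fin p, min (lam ((i : ℕ) + 1)) (r ^ 2) := by
      calc (n : ℝ) * r ^ 2 = ∑ _i : Fin n, r ^ 2 := by simp
        _ ≤ ∑ i : Fin n, min (lam ((Fin.castLE hnp i : ℕ) + 1)) (r ^ 2) := by
          refine Finset.sum_le_sum fun i _ => le_min (h.le.trans ?_) le_rfl
          exact hanti _ _ (by omega) (by simp) hnp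
        _ = ∑ i ∈ Finset.univ.map (Fin.castLEEmb hnp), min (lam ((i : ℕ) + 1)) (r ^ 2) := by
          rw [Finset.sum_map]; rfl
        _ ≤ _ := by
          refine Finset.sum_le_sum_of_subset_of_nonneg (Finset.subset_univ _) fun i _ _ => ?_
          exact le_min (hnonneg _ (by omega) (by omega)) (sq_nonneg r)
    have h2 : 0 < (n : ℝ) * r ^ 2 := by positivity
    nlinarith
  have hne : S.Nonempty := by
    set L := ∑ i : Fin p, lam ((i : ℕ) + 1) with hL
    have hL0 : 0 ≤ L := Finset.sum_nonneg fun i _ => hnonneg _ (by omega) (by omega)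
    refine ⟨√(L / (η * n) + 1), by positivity, ?_⟩
    rw [Real.sq_sqrt (by positivity)]
    calc ∑ i : Fin p, min (lam ((i : ℕ) + 1)) (L / (η * n) + 1) ≤ L :=
          Finset.sum_le_sum fun i _ => min_le_left _ _
      _ ≤ η * n * (L / (η * n) + 1) := by
        rw [mul_add, mul_div_cancel₀ _ (by positivity)]
        have : 0 < η * n := by positivity
        linarith
  have hpos : 0 < sInf S := (Real.sqrt_pos.2 hlam).trans_le (le_csInf hne hlow)
  refine ⟨hpos, ?_⟩
  have hclosed : IsClosed
      {r : ℝ | ∑ i : Fin p, min (lam ((i : ℕ) + 1)) (r ^ 2) ≤ η * n * r ^ 2} :=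
    isClosed_le (by fun_prop) (by fun_prop)
  have hmem := csInf_mem_closure hne ⟨_, hlow⟩
  exact hclosed.closure_subset_iff.2 (fun r hr => hr.2) hmem

lemma rsum_eq_sum_filter {p : ℕ} (lam : ℕ → ℝ) {k : ℕ} (hk : 1 ≤ k) :
    rsum p lam k =
      ∑ j ∈ Finset.univ.filter fun j : Fin p => k ≤ (j : ℕ) + 1, lam ((j : ℕ) + 1) := by
  rw [rsum]
  symm
  refine Finset.sum_bij (fun (j : Fin p) _ => (j : ℕ) + 1) (fun j hj => ?_) (fun i _ j _ h => ?_)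
    (fun i hi => ?_) fun _ _ => rfl
  · simp only [Finset.mem_filter] at hj
    simp only [Finset.mem_Icc]
    omega
  · exact Fin.ext (by omega)
  · rw [Finset.mem_Icc] at hi
    exact ⟨⟨i - 1, by omega⟩, by simp; omega, by simp; omega⟩

lemma predNorm_sq {p : ℕ} {lam : ℕ → ℝ} {Porth Sig : Matrix (Fin p) (Fin p) ℝ}
    (hnonneg : ∀ k, 1 ≤ k → k ≤ p → 0 ≤ lam k)
    (hSig : Sig = Porth * Matrix.diagonal (fun i : Fin p => lam ((i : ℕ) + 1)) * Porthᵀ)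
    (d : Fin p → ℝ) :
    predNorm Sig d ^ 2 = ∑ j : Fin p, lam ((j : ℕ) + 1) * (∑ k, d k * Porth k j) ^ 2 := by
  have h : d ⬝ᵥ Sig *ᵥ d = ∑ j : Fin p, lam ((j : ℕ) + 1) * (∑ k, d k * Porth k j) ^ 2 := by
    rw [hSig, ← Matrix.mulVec_mulVec, ← Matrix.mulVec_mulVec, Matrix.dotProduct_mulVec]
    simp only [dotProduct, Matrix.mulVec_diagonal]
    refine Finset.sum_congr rfl fun j _ => ?_
    simp only [Matrix.vecMul, Matrix.mulVec, dotProduct, Matrix.transpose_apply]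
    rw [Finset.sum_congr rfl fun k _ => mul_comm (Porth k j) (d k)]
    ring
  rw [predNorm, Real.sq_sqrt, h]
  rw [h]
  exact Finset.sum_nonneg fun j _ => mul_nonneg (hnonneg _ (by omega) (by omega)) (sq_nonneg _)

lemma sum_eigenDesign_mul {n p : ℕ} {Porth : Matrix (Fin p) (Fin p) ℝ}
    (hP : Porth * Porthᵀ = 1) (x : Fin n → Fin p → ℝ) (d : Fin p → ℝ) (i : Fin n) :
    ∑ j, eigenDesign Porth x i j * ∑ k, d k * Porth k j = ∑ j, x i j * d j := by
  have h : (x i ᵥ* Porth) ⬝ᵥ (d ᵥ* Porth) = x i ⬝ᵥ d := by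
    rw [← Matrix.mulVec_transpose Porth d, Matrix.dotProduct_mulVec, Matrix.vecMul_vecMul, hP,
      Matrix.vecMul_one]
  exact h

lemma sum_sq_eigenDesign {n p : ℕ} {Porth : Matrix (Fin p) (Fin p) ℝ}
    (hP : Porth * Porthᵀ = 1) (x : Fin n → Fin p → ℝ) (u : Fin n → ℝ) :
    ∑ j, (∑ i, eigenDesign Porth x i j * u i) ^ 2 = ∑ k, (∑ i, x i k * u i) ^ 2 := by
  rw [← sum_sq_mul_orthogonal hP fun k => ∑ i, x i k * u i]
  refine Finset.sum_congr rfl fun j _ => ?_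
  simp only [eigenDesign, Finset.sum_mul]
  rw [Finset.sum_comm]
  congr 1
  exact Finset.sum_congr rfl fun k _ => Finset.sum_congr rfl fun i _ => by ring

/-- On the event where the three design bounds hold, the minimum norm interpolator satisfies the
prediction bound. -/
lemma predNorm_sq_le_of_design_bounds {n p : ℕ} (hn : 0 < n) {lam : ℕ → ℝ}
    {Porth Sig : Matrix (Fin p) (Fin p) ℝ} (hnonneg : ∀ k, 1 ≤ k → k ≤ p → 0 ≤ lam k)
    (hP : Porth * Porthᵀ = 1)
    (hSig : Sig = Porth * Matrix.diagonal (fun i : Fin p => lam ((i : ℕ) + 1)) * Porthᵀ)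
    {x : Fin n → Fin p → ℝ} {βstar b : Fin p → ℝ} {ξ : Fin n → ℝ}
    (hb : IsMinInterp x (fun i => (∑ j, x i j * βstar j) + ξ i) b)
    {A B : Finset (Fin p)} {R r : ℝ} (hR : 0 < R) (hr : 0 < r)
    (hlam : ∀ j ∉ B, 0 < lam ((j : ℕ) + 1))
    (hlamB : ∀ j ∈ B, lam ((j : ℕ) + 1) ≤ r ^ 2 / 10000)
    (hA : ∀ u : Fin n → ℝ, R / 16 * ∑ i, u i ^ 2 ≤
      ∑ j : A, (∑ i, eigenDesign Porth x i j * u i) ^ 2)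
    (hB : ∀ u : Fin n → ℝ, ∑ j : B, (∑ i, eigenDesign Porth x i j * u i) ^ 2 ≤
      9 * (16 * (r ^ 2 / 10000) * n) * ∑ i, u i ^ 2)
    (hC : ∀ w : (Bᶜ : Finset (Fin p)) → ℝ, (n : ℝ) / 16 * ∑ j, w j ^ 2 ≤
      ∑ i, (∑ j : (Bᶜ : Finset (Fin p)),
        eigenDesign Porth x i j / √(lam ((j : Fin p) + 1)) * w j) ^ 2) :
    predNorm Sig (fun j => b j - βstar j) ^ 2 ≤
      max (((enorm2 βstar + 4 * enorm2 ξ / √R) * r) ^ 2) (100 * enorm2 ξ ^ 2 / n) := by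
  set d : Fin p → ℝ := fun j => b j - βstar j with hd
  set e : Fin p → ℝ := fun j => ∑ k, d k * Porth k j with he
  have hdist : enorm2 d ≤ enorm2 βstar + 4 * enorm2 ξ / √R := by
    have h4 : 4 * enorm2 ξ / √R = enorm2 ξ / (√R / 4) := by
      rw [div_div_eq_mul_div, mul_comm]
    rw [h4]
    refine hb.enorm2_sub_le (by positivity) fun u => ?_
    have h1 : (u ⬝ᵥ u) = ∑ i, u i ^ 2 := by simp [dotProduct, sq]
    have h2 : ((Matrix.of x)ᵀ *ᵥ u) ⬝ᵥ ((Matrix.of x)ᵀ *ᵥ u) = ∑ k, (∑ i, x i k * u i) ^ 2 := by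
      simp [dotProduct, Matrix.mulVec, sq]
    rw [h1, h2, div_pow, Real.sq_sqrt hR.le, ← sum_sq_eigenDesign hP]
    have h3 := hA u
    rw [Finset.sum_coe_sort A fun j => (∑ i, eigenDesign Porth x i j * u i) ^ 2] at h3
    norm_num at h3 ⊢
    exact h3.trans (Finset.sum_le_sum_of_subset_of_nonneg (Finset.subset_univ _)
      fun _ _ _ => sq_nonneg _)
  have hpred := predNorm_sq hnonneg hSig d
  have hsum_e : ∑ j, e j ^ 2 = enorm2 d ^ 2 := by
    rw [sum_sq_mul_orthogonal hP d, enorm2, Real.sq_sqrt (Finset.sum_nonneg fun _ _ => sq_nonneg _)]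
  have hres : ∀ i, ∑ j, eigenDesign Porth x i j * e j = ξ i := fun i => by
    rw [sum_eigenDesign_mul hP]
    simp only [hd, mul_sub, Finset.sum_sub_distrib, hb.1 i, add_sub_cancel_left]
  rcases le_or_gt (predNorm Sig d ^ 2) (((enorm2 βstar + 4 * enorm2 ξ / √R) * r) ^ 2) with h | h
  · exact h.trans (le_max_left _ _)
  · refine le_trans ?_ (le_max_right _ _)
    have hloc : r ^ 2 * ∑ j, e j ^ 2 ≤ ∑ j : Fin p, lam ((j : ℕ) + 1) * e j ^ 2 := by
      rw [← hpred, hsum_e, ← mul_pow, mul_comm]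
      refine le_trans ?_ h.le
      have := enorm2_nonneg d
      gcongr
    have hmain := sum_lam_sq_le_of_design_bounds hn (lam := fun j : Fin p => lam ((j : ℕ) + 1))
      hlam hlamB
      (fun u => by
        have := hB u
        rwa [Finset.sum_coe_sort B fun j => (∑ i, eigenDesign Porth x i j * u i) ^ 2] at this)
      (fun w => by
        have := hC fun j => w j
        rw [Finset.sum_coe_sort Bᶜ fun j => w j ^ 2] at this
        refine this.trans_eq (Finset.sum_congr rfl fun i _ => ?_)
        rw [Finset.sum_coe_sort Bᶜ fun j : Fin p =>
          eigenDesign Porth x i j / √(lam ((j : ℕ) + 1)) * w j]) hloc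
    simp only [hres] at hmain
    rw [hpred]
    rwa [enorm2, Real.sq_sqrt (Finset.sum_nonneg fun _ _ => sq_nonneg _)]

lemma ofReal_one_sub_le_of_compl_subset {Ω : Type*} [MeasurableSpace Ω] {P : Measure Ω}
    [IsProbabilityMeasure P] {E F : Set Ω} (hEF : Eᶜ ⊆ F) {x : ℝ} (hx : 0 ≤ x)
    (hF : P F ≤ ENNReal.ofReal x) : ENNReal.ofReal (1 - x) ≤ P E := by
  rw [ENNReal.ofReal_sub _ hx, ENNReal.ofReal_one, tsub_le_iff_right]
  calc (1 : ℝ≥0∞) = P (E ∪ Eᶜ) := by rw [Set.union_compl_self, measure_univ]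
    _ ≤ P E + P Eᶜ := measure_union_le _ _
    _ ≤ P E + ENNReal.ofReal x := by gcongr; exact (measure_mono hEF).trans hF

/-- Theorem 4: in the model `Y = Xβ* + ξ` with `p ≥ n`, `k* ≤ c n`
and i.i.d. `N(0,Σ)` rows, there exist constants `c₁, c₂, c₃ > 0` such that if `η > 0`
is small enough, with probability at least `1 - c₁ e^{-c₂ n}`,
`‖Σ^{1/2}(β̂ - β*)‖₂² ≤ max((ρ r*(η))², c₃‖ξ‖₂²/n)`. -/
theorem stmt10 :
    ∃ c0 > (0 : ℝ), ∃ c > (0 : ℝ),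
    ∃ c1 > (0 : ℝ), ∃ c2 > (0 : ℝ), ∃ c3 > (0 : ℝ), ∃ η0 > (0 : ℝ),
    ∀ η : ℝ, 0 < η → η ≤ η0 →
    ∀ (n p : ℕ), 0 < n → n ≤ p →
    ∀ (lam : ℕ → ℝ) (Porth Sig : Matrix (Fin p) (Fin p) ℝ),
      (∀ k, 1 ≤ k → k ≤ p → 0 ≤ lam k) →
      (∀ j k, 1 ≤ j → j ≤ k → k ≤ p → lam k ≤ lam j) →
      Porth * Porthᵀ = 1 →
      Sig = Porth * Matrix.diagonal (fun i : Fin p => lam ((i : ℕ) + 1)) * Porthᵀ →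
      n ≤ Sig.rank →
    ∀ (Ω : Type) (_ : MeasurableSpace Ω) (P : Measure Ω), IsProbabilityMeasure P →
    ∀ (X : Ω → Fin n → Fin p → ℝ) (ξ : Ω → Fin n → ℝ) (βstar : Fin p → ℝ)
      (βhat : Ω → Fin p → ℝ),
      Measure.map X P = (Measure.pi fun _ : Fin n => mvGaussian p lam Porth) →
      (∀ᵐ ω ∂P, IsMinInterp (X ω)
        (fun i => (∑ j, X ω i j * βstar j) + ξ ω i) (βhat ω)) →
      (kstarSet p lam c0 n).Nonempty → (kstar p lam c0 n : ℝ) ≤ c * n →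
      ENNReal.ofReal (1 - c1 * Real.exp (-c2 * n)) ≤
        P {ω | predNorm Sig (fun j => βhat ω j - βstar j) ^ 2 ≤
               max ((rho p lam c0 n βstar (enorm2 (ξ ω)) * rstar p n lam η) ^ 2)
                   (c3 * enorm2 (ξ ω) ^ 2 / n)} := by
  refine ⟨128, by norm_num, 1, one_pos, 5, by norm_num, 1 / 16, by norm_num, 100, by norm_num,
    1 / 10000000, by norm_num, ?_⟩
  intro η hη hη0 n p hn hnp lam Porth Sig hnonneg hanti hP hSig hrank Ω _ P _ X ξ βstar βhat hX
    hmin hkne _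
  have hn' : (0 : ℝ) < n := Nat.cast_pos.2 hn
  have hlamj : ∀ j : Fin p, 0 ≤ lam ((j : ℕ) + 1) := fun j => hnonneg _ (by omega) (by omega)
  obtain ⟨hr, hrsum⟩ := rstar_spec hn hnp hη (by linarith) hnonneg hanti
    (lam_pos_of_le_rank hn hnonneg hanti hSig hrank)
  set r := rstar p n lam η with hrdef
  obtain ⟨hk1, hkp, hk⟩ : kstar p lam 128 n ∈ kstarSet p lam 128 n := Nat.sInf_mem hkne
  set k := kstar p lam 128 n with hkdef
  have hlamk : 0 < lam k := by
    refine (hnonneg k hk1 hkp).lt_of_ne' fun h0 => ?_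
    rw [h0, div_zero] at hk
    linarith
  have hR : 128 * lam k * n ≤ rsum p lam k := by
    rw [le_div_iff₀ hlamk] at hk
    linarith
  have hR0 : 0 < rsum p lam k := lt_of_lt_of_le (by positivity) hR
  set A : Finset (Fin p) := Finset.univ.filter fun j => k ≤ (j : ℕ) + 1 with hAdef
  set B : Finset (Fin p) := Finset.univ.filter fun j => lam ((j : ℕ) + 1) ≤ r ^ 2 / 10000
    with hBdef
  have hr2 : 0 < r ^ 2 := by positivity
  have hB : ∀ j ∈ B, lam ((j : ℕ) + 1) ≤ r ^ 2 / 10000 := fun j hj => (Finset.mem_filter.1 hj).2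
  have hBc : ∀ j ∉ B, r ^ 2 / 10000 < lam ((j : ℕ) + 1) := fun j hj => by
    simpa [hBdef] using hj
  have hnr : η * n * r ^ 2 ≤ 1 / 10000000 * n * r ^ 2 := by gcongr
  have hmin0 : ∀ j : Fin p, 0 ≤ min (lam ((j : ℕ) + 1)) (r ^ 2) := fun j =>
    le_min (hlamj j) hr2.le
  have hBsum : ∑ j ∈ B, lam ((j : ℕ) + 1) ≤ 16 * (r ^ 2 / 10000) * n := by
    have h : ∑ j ∈ B, lam ((j : ℕ) + 1) ≤ ∑ j : Fin p, min (lam ((j : ℕ) + 1)) (r ^ 2) :=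
      (Finset.sum_le_sum fun j hj => le_min le_rfl ((hB j hj).trans (by linarith))).trans
        (Finset.sum_le_sum_of_subset_of_nonneg (Finset.subset_univ _) fun j _ _ => hmin0 j)
    nlinarith [mul_pos hn' hr2]
  have hBcard : 128 * ((Bᶜ : Finset (Fin p)).card : ℝ) ≤ n := by
    have h : ((Bᶜ : Finset (Fin p)).card : ℝ) * (r ^ 2 / 10000) ≤
        ∑ j : Fin p, min (lam ((j : ℕ) + 1)) (r ^ 2) := by
      rw [← nsmul_eq_mul]
      exact (Finset.card_nsmul_le_sum _ _ _ fun j hj =>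
        le_min (hBc j (Finset.mem_compl.1 hj)).le (by linarith)).trans
        (Finset.sum_le_sum_of_subset_of_nonneg (Finset.subset_univ _) fun j _ _ => hmin0 j)
    have h' : 128 * ((Bᶜ : Finset (Fin p)).card : ℝ) * r ^ 2 ≤ n * r ^ 2 := by
      nlinarith [mul_pos hn' hr2]
    exact le_of_mul_le_mul_right h' hr2
  have hRA : rsum p lam k = ∑ j ∈ A, lam ((j : ℕ) + 1) := rsum_eq_sum_filter lam hk1
  have hevA := measure_design_small_le hX hP A hlamk (fun j _ => hlamj j)
    (fun j hj => hanti _ _ hk1 (Finset.mem_filter.1 hj).2 (by omega)) (hRA ▸ hR)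
  rw [← hRA] at hevA
  have hevB := measure_design_large_le hX hP B (by positivity) (fun j _ => hlamj j) hB hBsum le_rfl
  have hevC := measure_whitened_small_le hX hP Bᶜ
    (fun j hj => lt_trans (by positivity) (hBc j (Finset.mem_compl.1 hj))) hBcard
  refine ofReal_one_sub_le_of_compl_subset (P := P) (F := _ ∪ _ ∪ _ ∪ _) ?_ (by positivity)
    ((measure_union_le _ _).trans (add_le_add ((measure_union_le _ _).trans (add_le_add
      ((measure_union_le _ _).trans (add_le_add hevA hevB)) hevC)) hmin.le) |>.trans ?_)
  · intro ω hω
    by_contra hgood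
    simp only [Set.mem_union, Set.mem_compl_iff, Set.mem_ofPred_eq, not_or, not_not] at hgood
    obtain ⟨⟨⟨hgA, hgB⟩, hgC⟩, hgm⟩ := hgood
    exact hω (predNorm_sq_le_of_design_bounds hn hnonneg hP hSig hgm hR0 hr
      (fun j hj => lt_trans (by positivity) (hBc j hj)) hB hgA hgB hgC)
  · rw [ENNReal.ofReal_mul (by norm_num), add_zero, ← one_add_one_eq_two]
    refine le_of_eq ?_
    rw [show ENNReal.ofReal 5 = 5 by simp]
    ring
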